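/- arXiv:2111.12906 — 2 statements merged into one kernel-verified Lean document; each statement's English description precedes it below -/
import Mathlib

section
/- Let Λ ∈ ℝ^{n×n} be symmetric positive semidefinite, W ∈ ℝ^{n×d}, δ > 0, and m ∈ ℝ. If δ + 1/2 + |m|·‖Λ‖₂·‖W‖₂ ≤ ‖Λ‖_i, then Λ − δI is positive definite (hence invertible) and ‖(Λ − δI)^{-1} ((1/2)I − mΛW)‖₂ ≤ 1. -/
open Matrix BigOperators

/-- Euclidean norm of a vector. -/
noncomputable def vnorm {k : ℕ} (v : Fin k → ℝ) : ℝ := Real.sqrt (v ⬝ᵥ v)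

/-- Spectral norm of a matrix: the largest singular value, i.e. the supremum of ‖Ax‖
over unit vectors x. -/
noncomputable def spNorm {n d : ℕ} (A : Matrix (Fin n) (Fin d) ℝ) : ℝ :=
  sSup {c | ∃ x : Fin d → ℝ, vnorm x = 1 ∧ c = vnorm (A *ᵥ x)}

/-- Infimum norm of a matrix: the smallest singular value (square root of the smallest
eigenvalue of AᵀA), i.e. the infimum of ‖Ax‖ over unit vectors x. -/
noncomputable def infNorm {n d : ℕ} (A : Matrix (Fin n) (Fin d) ℝ) : ℝ :=
  sInf {c | ∃ x : Fin d → ℝ, vnorm x = 1 ∧ c = vnorm (A *ᵥ x)}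

/-- The rectangular identity block. -/
def rectId (n d : ℕ) : Matrix (Fin n) (Fin d) ℝ :=
  Matrix.of fun i j => if (i : ℕ) = (j : ℕ) then 1 else 0

lemma vnorm_eq {k : ℕ} (v : Fin k → ℝ) : vnorm v = ‖WithLp.toLp 2 v‖ := by
  rw [vnorm, EuclideanSpace.norm_eq]
  congr 1
  simp [dotProduct, pow_two]

lemma vnorm_nonneg {k : ℕ} (v : Fin k → ℝ) : 0 ≤ vnorm v := Real.sqrt_nonneg _

lemma vnorm_smul {k : ℕ} (a : ℝ) (v : Fin k → ℝ) : vnorm (a • v) = |a| * vnorm v := by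
  rw [vnorm_eq, vnorm_eq, WithLp.toLp_smul, norm_smul, Real.norm_eq_abs]

lemma vnorm_sub_le {k : ℕ} (v w : Fin k → ℝ) : vnorm (v - w) ≤ vnorm v + vnorm w := by
  simp only [vnorm_eq, WithLp.toLp_sub]
  exact norm_sub_le _ _

lemma vnorm_sq {k : ℕ} (v : Fin k → ℝ) : vnorm v ^ 2 = v ⬝ᵥ v := by
  rw [vnorm, Real.sq_sqrt]
  exact Finset.sum_nonneg fun i _ => mul_self_nonneg _

lemma dot_le_vnorm {k : ℕ} (v w : Fin k → ℝ) : v ⬝ᵥ w ≤ vnorm v * vnorm w := by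
  have := real_inner_le_norm (WithLp.toLp 2 v) (WithLp.toLp 2 w)
  rw [vnorm_eq, vnorm_eq]
  refine le_trans (le_of_eq ?_) this
  simp [PiLp.inner_apply, dotProduct, mul_comm]

lemma vnorm_pos {k : ℕ} {v : Fin k → ℝ} (hv : vnorm v ≠ 0) : 0 < vnorm v :=
  lt_of_le_of_ne (vnorm_nonneg v) (Ne.symm hv)

lemma vnorm_zero_iff {k : ℕ} (v : Fin k → ℝ) : vnorm v = 0 ↔ v = 0 := by
  rw [vnorm_eq, norm_eq_zero]
  exact ⟨fun h => by simpa using congrArg WithLp.ofLp h, fun h => by simp [h]⟩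

lemma spNorm_bdd {n d : ℕ} (A : Matrix (Fin n) (Fin d) ℝ) :
    BddAbove {c | ∃ x : Fin d → ℝ, vnorm x = 1 ∧ c = vnorm (A *ᵥ x)} := by
  refine ⟨‖(LinearMap.toContinuousLinearMap (Matrix.toLpLin 2 2 A))‖, ?_⟩
  rintro c ⟨x, hx, rfl⟩
  have := (LinearMap.toContinuousLinearMap (Matrix.toLpLin 2 2 A)).le_opNorm (WithLp.toLp 2 x)
  rw [← vnorm_eq x, hx, mul_one] at this
  rw [vnorm_eq]
  simpa using this

lemma spNorm_nonneg {n d : ℕ} (A : Matrix (Fin n) (Fin d) ℝ) : 0 ≤ spNorm A := by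
  apply Real.sSup_nonneg
  rintro c ⟨x, hx, rfl⟩
  exact vnorm_nonneg _

lemma le_spNorm {n d : ℕ} (A : Matrix (Fin n) (Fin d) ℝ) (x : Fin d → ℝ) :
    vnorm (A *ᵥ x) ≤ spNorm A * vnorm x := by
  by_cases hx : vnorm x = 0
  · have := (vnorm_zero_iff x).1 hx
    subst this
    simp [hx, (vnorm_zero_iff _).2]
  · have hp := vnorm_pos hx
    have h1 : vnorm ((vnorm x)⁻¹ • x) = 1 := by
      rw [vnorm_smul, abs_of_pos (inv_pos.2 hp), inv_mul_cancel₀ hx]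
    have h2 := le_csSup (spNorm_bdd A) ⟨_, h1, rfl⟩
    rw [Matrix.mulVec_smul, vnorm_smul, abs_of_pos (inv_pos.2 hp), inv_mul_le_iff₀ hp] at h2
    rw [mul_comm]; exact h2

lemma rectId_le {n d : ℕ} (x : Fin d → ℝ) : vnorm (rectId n d *ᵥ x) ≤ vnorm x := by
  apply Real.sqrt_le_sqrt
  let g : ℕ → ℝ := fun k => if h : k < d then x ⟨k, h⟩ * x ⟨k, h⟩ else 0
  have hg : ∀ k, 0 ≤ g k := by
    intro k
    simp only [g]
    split_ifs
    · exact mul_self_nonneg _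
    · exact le_rfl
  have h1 : (rectId n d *ᵥ x) ⬝ᵥ (rectId n d *ᵥ x) = ∑ i : Fin n, g i := by
    refine Finset.sum_congr rfl fun i _ => ?_
    have : (rectId n d *ᵥ x) i = if h : (i : ℕ) < d then x ⟨i, h⟩ else 0 := by
      simp only [rectId, mulVec, dotProduct, Matrix.of_apply, ite_mul, one_mul, zero_mul]
      split_ifs with h
      · rw [Finset.sum_eq_single ⟨i, h⟩]
        · simp
        · intro b _ hb
          rw [if_neg]
          intro hh
          exact hb (Fin.ext hh.symm)
        · simp
      · refine Finset.sum_eq_zero fun j _ => ?_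
        rw [if_neg]
        intro hh
        exact h (hh ▸ j.2)
    rw [this]
    simp only [g]
    split_ifs <;> simp
  have h2 : x ⬝ᵥ x = ∑ i : Fin d, g i := by
    refine Finset.sum_congr rfl fun i _ => ?_
    simp [g]
  rw [h1, h2, Fin.sum_univ_eq_sum_range, Fin.sum_univ_eq_sum_range]
  have h3 : ∑ k ∈ Finset.range d, g k = ∑ k ∈ Finset.range (max n d), g k := by
    apply Finset.sum_subset
    · intro k; simp; omega
    · intro k _ hk
      simp only [Finset.mem_range] at hk
      simp [g, hk]
  rw [h3]
  apply Finset.sum_le_sum_of_subset_of_nonneg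
  · intro k; simp; omega
  · intro k _ _; exact hg k

lemma psd_sub_inf {n : ℕ} (Λ : Matrix (Fin n) (Fin n) ℝ) (hΛ : Λ.PosSemidef) :
    (Λ - infNorm Λ • (1 : Matrix (Fin n) (Fin n) ℝ)).PosSemidef := by
  have hH : (Λ - infNorm Λ • (1 : Matrix (Fin n) (Fin n) ℝ)).IsHermitian := by
    refine hΛ.1.sub ?_
    simp [Matrix.IsHermitian, conjTranspose_smul]
  rw [hH.posSemidef_iff_eigenvalues_nonneg]
  intro i
  have h1 := hH.mulVec_eigenvectorBasis i
  set v : Fin n → ℝ := (hH.eigenvectorBasis i).ofLp with hv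
  have hn : vnorm v = 1 := by
    rw [vnorm_eq]
    exact hH.eigenvectorBasis.orthonormal.1 i
  have h2 : Λ *ᵥ v = (hH.eigenvalues i + infNorm Λ) • v := by
    rw [sub_mulVec, smul_mulVec, one_mulVec, sub_eq_iff_eq_add] at h1
    rw [h1, add_smul]
  have h3 : infNorm Λ ≤ vnorm (Λ *ᵥ v) := by
    refine csInf_le ⟨0, ?_⟩ ⟨v, hn, rfl⟩
    rintro c ⟨x, _, rfl⟩
    exact vnorm_nonneg _
  have h4 : 0 ≤ v ⬝ᵥ (Λ *ᵥ v) := by simpa using hΛ.dotProduct_mulVec_nonneg v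
  have h5 : v ⬝ᵥ v = 1 := by rw [← vnorm_sq, hn]; norm_num
  rw [h2, dotProduct_smul, h5, smul_eq_mul, mul_one] at h4
  rw [h2, vnorm_smul, hn, mul_one, abs_of_nonneg h4] at h3
  simpa using h3

/-- If δ + ½ + |m|·‖Λ‖₂·‖W‖₂ ≤ ‖Λ‖ᵢ for a symmetric positive semidefinite Λ and δ > 0,
then Λ − δI is positive definite and ‖(Λ − δI)⁻¹(½I − mΛW)‖₂ ≤ 1. -/
theorem claim3_offdiag_bound
    {n d : ℕ} (Λ : Matrix (Fin n) (Fin n) ℝ) (hΛ : Λ.PosSemidef)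
    (W : Matrix (Fin n) (Fin d) ℝ) (δ m : ℝ) (hδ : 0 < δ)
    (h : δ + 1 / 2 + |m| * spNorm Λ * spNorm W ≤ infNorm Λ) :
    (Λ - δ • (1 : Matrix (Fin n) (Fin n) ℝ)).PosDef ∧
      spNorm ((Λ - δ • (1 : Matrix (Fin n) (Fin n) ℝ))⁻¹ *
        ((1 / 2 : ℝ) • rectId n d - m • (Λ * W))) ≤ 1 := by
  have hs1 := spNorm_nonneg Λ
  have hs2 := spNorm_nonneg W
  have hp : 0 ≤ |m| * spNorm Λ * spNorm W := by positivity
  have hc : 0 < infNorm Λ - δ := by linarith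
  have hpsd := psd_sub_inf Λ hΛ
  have hdec : Λ - δ • (1 : Matrix (Fin n) (Fin n) ℝ) =
      (infNorm Λ - δ) • (1 : Matrix (Fin n) (Fin n) ℝ) +
      (Λ - infNorm Λ • (1 : Matrix (Fin n) (Fin n) ℝ)) := by
    rw [sub_smul]; abel
  have hPD : (Λ - δ • (1 : Matrix (Fin n) (Fin n) ℝ)).PosDef := by
    rw [hdec]
    exact (Matrix.PosDef.one.smul hc).add_posSemidef hpsd
  refine ⟨hPD, ?_⟩
  have hlow : ∀ y : Fin n → ℝ, (infNorm Λ - δ) * vnorm y ≤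
      vnorm ((Λ - δ • (1 : Matrix (Fin n) (Fin n) ℝ)) *ᵥ y) := by
    intro y
    by_cases hy : vnorm y = 0
    · rw [hy, mul_zero]; exact vnorm_nonneg _
    · have hyp := vnorm_pos hy
      have h1 := dot_le_vnorm y ((Λ - δ • (1 : Matrix (Fin n) (Fin n) ℝ)) *ᵥ y)
      have h2 : 0 ≤ y ⬝ᵥ ((Λ - infNorm Λ • (1 : Matrix (Fin n) (Fin n) ℝ)) *ᵥ y) := by
        simpa using hpsd.dotProduct_mulVec_nonneg y
      have h3 : y ⬝ᵥ ((Λ - δ • (1 : Matrix (Fin n) (Fin n) ℝ)) *ᵥ y) =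
          (infNorm Λ - δ) * vnorm y ^ 2 +
          y ⬝ᵥ ((Λ - infNorm Λ • (1 : Matrix (Fin n) (Fin n) ℝ)) *ᵥ y) := by
        rw [hdec, add_mulVec, dotProduct_add, smul_mulVec, one_mulVec, dotProduct_smul,
          vnorm_sq, smul_eq_mul]
      refine le_of_mul_le_mul_left ?_ hyp
      nlinarith
  apply Real.sSup_le _ zero_le_one
  rintro c ⟨x, hx, rfl⟩
  have hdet : IsUnit (Λ - δ • (1 : Matrix (Fin n) (Fin n) ℝ)).det :=
    isUnit_iff_ne_zero.2 hPD.det_pos.ne'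
  have h1 := hlow (((Λ - δ • (1 : Matrix (Fin n) (Fin n) ℝ))⁻¹ *
        ((1 / 2 : ℝ) • rectId n d - m • (Λ * W))) *ᵥ x)
  rw [mulVec_mulVec, Matrix.mul_nonsing_inv_cancel_left _ _ hdet] at h1
  have h2 : vnorm (((1 / 2 : ℝ) • rectId n d - m • (Λ * W)) *ᵥ x) ≤
      1 / 2 + |m| * spNorm Λ * spNorm W := by
    rw [sub_mulVec, smul_mulVec, smul_mulVec, ← mulVec_mulVec]
    refine (vnorm_sub_le _ _).trans ?_
    rw [vnorm_smul, vnorm_smul]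
    have a1 := rectId_le (n := n) x
    have a2 := le_spNorm Λ (W *ᵥ x)
    have a3 := le_spNorm W x
    rw [hx] at a1 a3
    have a4 : vnorm (Λ *ᵥ (W *ᵥ x)) ≤ spNorm Λ * spNorm W :=
      a2.trans (mul_le_mul_of_nonneg_left (by linarith) hs1)
    have a5 := mul_le_mul_of_nonneg_left a4 (abs_nonneg m)
    have a6 : |(1 / 2 : ℝ)| = 1 / 2 := by norm_num
    rw [a6]
    linarith
  refine le_of_mul_le_mul_left ?_ hc
  linarith
end

section
/- Let f : ℝ^n → ℝ^m be incrementally (Q,S,R)-dissipative with Q = −δI, S = (1/2)I, R = −νI, where δ > 0 and 4δν ≤ 1. Then for all x, d ∈ ℝ^n, ‖f(x + d) − f(x)‖₂ ≤ γ·‖d‖₂ with γ = (1 + √(1 − 4δν))/(2δ). In particular, an incrementally output strictly passive neural network shifts its output by at most a bounded amount under any norm-bounded adversarial input perturbation. -/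
open Matrix BigOperators

/-- `rdot x y = xᵀ Ĩ y` where Ĩ is the rectangular identity block, i.e. the
Euclidean pairing of `x` and `y` on their common coordinates. -/
def rdot {a b : ℕ} (x : Fin a → ℝ) (y : Fin b → ℝ) : ℝ :=
  ∑ i : Fin a, ∑ j : Fin b, if (i : ℕ) = (j : ℕ) then x i * y j else 0

theorem ind_sum_le {b : ℕ} (k : ℕ) :
    ∑ j : Fin b, (if k = (j : ℕ) then (1 : ℝ) else 0) ≤ 1 := by
  rw [Finset.sum_boole]
  have : (Finset.univ.filter (fun j : Fin b => k = (j : ℕ))).card ≤ 1 := by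
    rw [Finset.card_le_one]
    intro p hp q hq
    simp only [Finset.mem_filter, Finset.mem_univ, true_and] at hp hq
    exact Fin.ext (hp.symm.trans hq)
  exact_mod_cast this

theorem pad_sum_le {a b : ℕ} (x : Fin a → ℝ) :
    ∑ i : Fin a, ∑ j : Fin b, ((if (i : ℕ) = (j : ℕ) then (1 : ℝ) else 0) * x i) ^ 2
      ≤ x ⬝ᵥ x := by
  unfold dotProduct
  refine Finset.sum_le_sum fun i _ => ?_
  have h := mul_le_mul_of_nonneg_right (ind_sum_le (b := b) (i : ℕ)) (mul_self_nonneg (x i))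
  rw [Finset.sum_mul, one_mul] at h
  refine le_trans (le_of_eq (Finset.sum_congr rfl fun j _ => ?_)) h
  split_ifs <;> ring

theorem rdot_le {a b : ℕ} (x : Fin a → ℝ) (y : Fin b → ℝ) :
    rdot x y ≤ vnorm x * vnorm y := by
  have hx0 : 0 ≤ x ⬝ᵥ x := Finset.sum_nonneg fun i _ => mul_self_nonneg (x i)
  have h := Finset.sum_mul_sq_le_sq_mul_sq (Finset.univ : Finset (Fin a × Fin b))
    (fun p => (if (p.1 : ℕ) = (p.2 : ℕ) then (1 : ℝ) else 0) * x p.1)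
    (fun p => (if (p.2 : ℕ) = (p.1 : ℕ) then (1 : ℝ) else 0) * y p.2)
  have e : ∑ p : Fin a × Fin b, ((if (p.1 : ℕ) = (p.2 : ℕ) then (1 : ℝ) else 0) * x p.1) *
      ((if (p.2 : ℕ) = (p.1 : ℕ) then (1 : ℝ) else 0) * y p.2) = rdot x y := by
    rw [Fintype.sum_prod_type]
    unfold rdot
    refine Finset.sum_congr rfl fun i _ => Finset.sum_congr rfl fun j _ => ?_
    by_cases hij : (i : ℕ) = (j : ℕ)
    · simp [hij]
    · simp [hij]
  rw [e] at h
  have hX := pad_sum_le (b := b) x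
  have hY := pad_sum_le (b := a) y
  rw [Fintype.sum_prod_type, Fintype.sum_prod_type_right] at h
  unfold vnorm
  rw [← Real.sqrt_mul hx0]
  refine Real.le_sqrt_of_sq_le (h.trans ?_)
  exact mul_le_mul hX hY
    (Finset.sum_nonneg fun i _ => Finset.sum_nonneg fun j _ => sq_nonneg _) hx0

/-- An incrementally (−δI, ½I, −νI)-dissipative map with δ > 0 has its output shift
bounded by γ = (1 + √(1 − 4δν))/(2δ) times the input perturbation:
‖f(x + d) − f(x)‖₂ ≤ γ‖d‖₂. -/
theorem incrementally_dissipative_implies_gain_bound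
    {n m : ℕ} (f : (Fin n → ℝ) → (Fin m → ℝ)) (δ ν : ℝ)
    (hδ : 0 < δ) (h4 : 4 * δ * ν ≤ 1)
    (hdiss : ∀ x₁ x₂ : Fin n → ℝ,
      0 ≤ -δ * ((f x₁ - f x₂) ⬝ᵥ (f x₁ - f x₂))
          + rdot (x₁ - x₂) (f x₁ - f x₂)
          - ν * ((x₁ - x₂) ⬝ᵥ (x₁ - x₂))) :
    ∀ x d : Fin n → ℝ,
      vnorm (f (x + d) - f x) ≤ (1 + Real.sqrt (1 - 4 * δ * ν)) / (2 * δ) * vnorm d := by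
  intro x d
  have h := hdiss (x + d) x
  rw [add_sub_cancel_left] at h
  have hr := rdot_le d (f (x + d) - f x)
  have sqv : ∀ {k : ℕ} (v : Fin k → ℝ), v ⬝ᵥ v = vnorm v ^ 2 := fun v =>
    (Real.sq_sqrt (Finset.sum_nonneg fun i _ => mul_self_nonneg (v i))).symm
  rw [sqv, sqv] at h
  have hb : 0 ≤ vnorm d := Real.sqrt_nonneg _
  generalize vnorm (f (x + d) - f x) = a at *
  generalize vnorm d = b at *
  have hs := Real.sq_sqrt (show 0 ≤ 1 - 4 * δ * ν by linarith)
  have hs0 := Real.sqrt_nonneg (1 - 4 * δ * ν)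
  generalize Real.sqrt (1 - 4 * δ * ν) = s at *
  have key : (2 * δ * a - b) ^ 2 ≤ (s * b) ^ 2 := by
    rw [mul_pow, hs]
    have h1 : 0 ≤ 4 * δ * (-δ * a ^ 2 + b * a - ν * b ^ 2) :=
      mul_nonneg (by linarith) (by linarith)
    linarith
  have h2 := abs_le_of_sq_le_sq key (mul_nonneg hs0 hb)
  rw [div_mul_eq_mul_div, le_div_iff₀ (by linarith)]
  linarith [le_of_abs_le h2]
end
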